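/- arXiv:2002.02743 — 2 statements merged into one kernel-verified Lean document; each statement's English description precedes it below -/
import Mathlib

section
/- Let S ⊆ M_n(ℂ) be a noncommutative graph. Then for every k ≥ 1, α(S^{⊗k}) ≤ H(S)^k, where S^{⊗k} ⊆ M_{n^k}(ℂ) is the k-fold tensor product of S with itself. Consequently the Shannon capacity Θ(S) = sup_{k≥1} α(S^{⊗k})^{1/k} satisfies Θ(S) ≤ H(S). -/
/-!
Let `B` attain the Haemers bound `h` of `S`, and factor it as `B = U * V` with inner dimension `h`
(`exists_rank_factorization`).  The tensor power `B^{⊗k}` then factors through `ℂ^(h^k)`, its blocks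
are indexed by `a, b : Fin k → Fin m` and lie in `S^{⊗k}`, and its diagonal blocks sum to the
identity because `∑_a ⊗_t B_{a t, a t} = ⊗_t ∑_i B_{i,i} = I`.

Given independent unit vectors `ψ_1, …, ψ_ℓ` for `S^{⊗k}`, the numbers
`⟨ψ_i| (B^{⊗k})_{a,a} |ψ_i⟩` sum over `a` to `⟨ψ_i|ψ_i⟩ = 1`, so some multi-index `a i` makes this
number nonzero.  The `ℓ × ℓ` matrix with entries `⟨ψ_i| (B^{⊗k})_{a i, a j} |ψ_j⟩` is diagonal by
independence, with nonzero diagonal, hence has rank `ℓ`; it also factors through `ℂ^(h^k)`, so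
`ℓ ≤ h^k` (`indep_card_le`).  The bound on the Shannon capacity follows by taking roots.
-/

open Matrix

noncomputable section

/-- The `(i,j)` block of an `m × m` block matrix with `ι × ι` blocks. -/
def blockOf {m : ℕ} {ι : Type} (B : Matrix (Fin m × ι) (Fin m × ι) ℂ)
    (i j : Fin m) : Matrix ι ι ℂ :=
  Matrix.of fun a b => B (i, a) (j, b)

/-- The Haemers bound of a noncommutative graph `S ⊆ M_ι(ℂ)`. -/
def Haemers {ι : Type} [Fintype ι] [DecidableEq ι]
    (S : Submodule ℂ (Matrix ι ι ℂ)) : ℕ :=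
  sInf { k : ℕ | ∃ m : ℕ, ∃ B : Matrix (Fin m × ι) (Fin m × ι) ℂ,
    (∀ i j : Fin m, blockOf B i j ∈ S) ∧
    (∑ i : Fin m, blockOf B i i) = 1 ∧ B.rank = k }

/-- The independence number of a noncommutative graph `S ⊆ M_ι(ℂ)`: the maximum number `ℓ`
of unit vectors `ψ_1, …, ψ_ℓ` with `⟨ψ_i|A|ψ_j⟩ = 0` for all distinct `i, j` and `A ∈ S`. -/
def indepNum {ι : Type} [Fintype ι] (S : Submodule ℂ (Matrix ι ι ℂ)) : ℕ :=
  sSup { ℓ : ℕ | ∃ ψ : Fin ℓ → (ι → ℂ),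
    (∀ i, star (ψ i) ⬝ᵥ ψ i = 1) ∧
    ∀ i j : Fin ℓ, i ≠ j → ∀ A ∈ S, star (ψ i) ⬝ᵥ (A *ᵥ ψ j) = 0 }

/-- The `k`-fold tensor power `S^{⊗k}` of a matrix subspace `S ⊆ M_n(ℂ)`, realized on the
index set `Fin k → Fin n`: the span of the elementary tensors `A_1 ⊗ ⋯ ⊗ A_k`, `A_i ∈ S`. -/
def tensorPow {n : ℕ} (S : Submodule ℂ (Matrix (Fin n) (Fin n) ℂ)) (k : ℕ) :
    Submodule ℂ (Matrix (Fin k → Fin n) (Fin k → Fin n) ℂ) :=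
  Submodule.span ℂ { C | ∃ A : Fin k → Matrix (Fin n) (Fin n) ℂ,
    (∀ i, A i ∈ S) ∧ C = Matrix.of fun a b => ∏ i, A i (a i) (b i) }

/-- A matrix factors through a space of dimension its rank: the columns of `U` form a basis of the
column space of `A`, and the columns of `V` are the coordinates of those of `A`. -/
lemma exists_rank_factorization {p q : Type} [Fintype p] [Fintype q] (A : Matrix p q ℂ) :
    ∃ (U : Matrix p (Fin A.rank) ℂ) (V : Matrix (Fin A.rank) q ℂ), A = U * V := by
  let W := Submodule.span ℂ (Set.range A.col)
  have hW : Module.finrank ℂ W = A.rank := (rank_eq_finrank_span_cols A).symm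
  let b : Module.Basis (Fin A.rank) ℂ W := Module.finBasisOfFinrankEq ℂ W hW
  let c : q → W := fun j => ⟨A.col j, Submodule.subset_span ⟨j, rfl⟩⟩
  refine ⟨Matrix.of fun i r => (b r : p → ℂ) i, Matrix.of fun r j => b.repr (c j) r, ?_⟩
  ext i j
  have h := congrArg (fun w : W => (w : p → ℂ) i) (b.sum_repr (c j))
  simp only [Submodule.coe_sum, Submodule.coe_smul, Finset.sum_apply, Pi.smul_apply,
    smul_eq_mul] at h
  simp only [Matrix.mul_apply, Matrix.of_apply]
  calc A i j = (c j : p → ℂ) i := rfl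
    _ = _ := by rw [← h]; exact Finset.sum_congr rfl fun _ _ => mul_comm _ _

/-- The block of `B^{⊗k}` at the multi-indices `a`, `b`, namely `⊗_t B_{a t, b t}`. -/
def tensorBlock {m n k : ℕ} (B : Matrix (Fin m × Fin n) (Fin m × Fin n) ℂ) (a b : Fin k → Fin m) :
    Matrix (Fin k → Fin n) (Fin k → Fin n) ℂ :=
  Matrix.of fun x y => ∏ t, B (a t, x t) (b t, y t)

lemma tensorBlock_mem {m n k : ℕ} {S : Submodule ℂ (Matrix (Fin n) (Fin n) ℂ)}
    {B : Matrix (Fin m × Fin n) (Fin m × Fin n) ℂ} (hB : ∀ i j, blockOf B i j ∈ S)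
    (a b : Fin k → Fin m) : tensorBlock B a b ∈ tensorPow S k :=
  Submodule.subset_span ⟨fun t => blockOf B (a t) (b t), fun _ => hB _ _, rfl⟩

lemma sum_tensorBlock {m n k : ℕ} {B : Matrix (Fin m × Fin n) (Fin m × Fin n) ℂ}
    (hB : ∑ i, blockOf B i i = 1) : ∑ a : Fin k → Fin m, tensorBlock B a a = 1 := by
  ext x y
  have h1 (u v : Fin n) : ∑ i, B (i, u) (i, v) = (1 : Matrix (Fin n) (Fin n) ℂ) u v := by
    rw [← hB, Matrix.sum_apply]; rfl
  rw [Matrix.sum_apply]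
  simp only [tensorBlock, Matrix.of_apply]
  rw [← Fintype.prod_sum (fun t i => B (i, x t) (i, y t))]
  simp only [h1, Matrix.one_apply, Finset.prod_ite_zero, Finset.prod_const_one, Finset.mem_univ,
    true_imp_iff, funext_iff]

/-- An independent family for `S^{⊗k}` has at most `(rank B)^k` members, for every `B` feasible in
the definition of the Haemers bound of `S`. -/
lemma indep_card_le {m n k ℓ : ℕ} {S : Submodule ℂ (Matrix (Fin n) (Fin n) ℂ)}
    {B : Matrix (Fin m × Fin n) (Fin m × Fin n) ℂ} (hB : ∀ i j, blockOf B i j ∈ S)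
    (hsum : ∑ i, blockOf B i i = 1) (ψ : Fin ℓ → (Fin k → Fin n) → ℂ)
    (hψ : ∀ i, star (ψ i) ⬝ᵥ ψ i = 1)
    (hind : ∀ i j, i ≠ j → ∀ A ∈ tensorPow S k, star (ψ i) ⬝ᵥ (A *ᵥ ψ j) = 0) :
    ℓ ≤ B.rank ^ k := by
  have hex (i : Fin ℓ) : ∃ a, star (ψ i) ⬝ᵥ (tensorBlock B a a *ᵥ ψ i) ≠ 0 := by
    by_contra! h
    have h1 : star (ψ i) ⬝ᵥ ((1 : Matrix (Fin k → Fin n) (Fin k → Fin n) ℂ) *ᵥ ψ i) = 1 := by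
      rw [Matrix.one_mulVec, hψ]
    rw [← sum_tensorBlock hsum, Matrix.sum_mulVec, dotProduct_sum,
      Finset.sum_eq_zero fun a _ => h a] at h1
    exact zero_ne_one h1
  choose a ha using hex
  obtain ⟨U, V, hUV⟩ := exists_rank_factorization B
  let G : Matrix (Fin ℓ) (Fin ℓ) ℂ :=
    Matrix.of fun i j => star (ψ i) ⬝ᵥ (tensorBlock B (a i) (a j) *ᵥ ψ j)
  let d : Fin ℓ → ℂ := fun i => star (ψ i) ⬝ᵥ (tensorBlock B (a i) (a i) *ᵥ ψ i)
  have hG : G = Matrix.diagonal d := by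
    ext i j
    by_cases hij : i = j
    · subst hij; simp [G, d]
    · rw [Matrix.diagonal_apply_ne _ hij]
      exact hind i j hij _ (tensorBlock_mem hB _ _)
  have hrank : G.rank = ℓ := by
    rw [Matrix.rank_of_det_ne_zero, Fintype.card_fin]
    rw [hG, Matrix.det_diagonal]
    exact Finset.prod_ne_zero_iff.mpr fun i _ => ha i
  let Uk (i : Fin ℓ) : Matrix (Fin k → Fin n) (Fin k → Fin B.rank) ℂ :=
    Matrix.of fun x r => ∏ t, U (a i t, x t) (r t)
  let Vk (j : Fin ℓ) : Matrix (Fin k → Fin B.rank) (Fin k → Fin n) ℂ :=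
    Matrix.of fun r y => ∏ t, V (r t) (a j t, y t)
  have hblock (i j : Fin ℓ) : tensorBlock B (a i) (a j) = Uk i * Vk j := by
    ext x y
    simp only [tensorBlock, Matrix.of_apply, Matrix.mul_apply, Uk, Vk, ← Finset.prod_mul_distrib]
    rw [← Fintype.prod_sum (fun t r => U (a i t, x t) r * V r (a j t, y t))]
    refine Finset.prod_congr rfl fun t _ => ?_
    rw [← Matrix.mul_apply, ← hUV]
  let P : Matrix (Fin ℓ) (Fin k → Fin B.rank) ℂ := Matrix.of fun i => star (ψ i) ᵥ* Uk i
  let Q : Matrix (Fin k → Fin B.rank) (Fin ℓ) ℂ := Matrix.of fun r j => (Vk j *ᵥ ψ j) r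
  have hPQ : G = P * Q := by
    ext i j
    change star (ψ i) ⬝ᵥ (tensorBlock B (a i) (a j) *ᵥ ψ j) =
      (star (ψ i) ᵥ* Uk i) ⬝ᵥ (Vk j *ᵥ ψ j)
    rw [hblock, ← Matrix.mulVec_mulVec, Matrix.dotProduct_mulVec]
  calc ℓ = (P * Q).rank := by rw [← hPQ, hrank]
    _ ≤ P.rank := Matrix.rank_mul_le_left P Q
    _ ≤ Fintype.card (Fin k → Fin B.rank) := Matrix.rank_le_card_width P
    _ = B.rank ^ k := by simp

/-- The Haemers bound is attained: the set in its definition contains the rank of the `1 × 1` block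
matrix with single block `I`, so its infimum is not the junk value of an empty set. -/
lemma exists_haemers {n : ℕ} {S : Submodule ℂ (Matrix (Fin n) (Fin n) ℂ)}
    (hone : (1 : Matrix (Fin n) (Fin n) ℂ) ∈ S) :
    ∃ m : ℕ, ∃ B : Matrix (Fin m × Fin n) (Fin m × Fin n) ℂ,
      (∀ i j : Fin m, blockOf B i j ∈ S) ∧
      (∑ i : Fin m, blockOf B i i) = 1 ∧ B.rank = Haemers S := by
  have hblock (i j : Fin 1) :
      blockOf (1 : Matrix (Fin 1 × Fin n) (Fin 1 × Fin n) ℂ) i j = 1 := by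
    ext x y
    simp [blockOf, Matrix.one_apply, Subsingleton.elim i j]
  refine Nat.sInf_mem (s := { k : ℕ | ∃ m : ℕ, ∃ B : Matrix (Fin m × Fin n) (Fin m × Fin n) ℂ,
    (∀ i j : Fin m, blockOf B i j ∈ S) ∧
    (∑ i : Fin m, blockOf B i i) = 1 ∧ B.rank = k }) ⟨_, 1, 1, fun i j => ?_, ?_, rfl⟩
  · rw [hblock]; exact hone
  · simp [hblock]

lemma indepNum_tensorPow_le {n : ℕ} {S : Submodule ℂ (Matrix (Fin n) (Fin n) ℂ)}
    (hone : (1 : Matrix (Fin n) (Fin n) ℂ) ∈ S) (k : ℕ) :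
    indepNum (tensorPow S k) ≤ Haemers S ^ k := by
  obtain ⟨m, B, hB, hsum, hrank⟩ := exists_haemers hone
  rw [← hrank]
  refine csSup_le' ?_
  rintro ℓ ⟨ψ, hψ, hind⟩
  exact indep_card_le hB hsum ψ hψ hind

/-- For every `k ≥ 1`, `α(S^{⊗k}) ≤ H(S)^k`; consequently the Shannon capacity
`Θ(S) = sup_{k ≥ 1} α(S^{⊗k})^{1/k}` is at most the Haemers bound `H(S)`. -/
theorem shannon_capacity_le_haemers (n : ℕ)
    (S : Submodule ℂ (Matrix (Fin n) (Fin n) ℂ))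
    (hstar : ∀ A ∈ S, Aᴴ ∈ S) (hone : (1 : Matrix (Fin n) (Fin n) ℂ) ∈ S) :
    (∀ k : ℕ, 1 ≤ k → indepNum (tensorPow S k) ≤ (Haemers S) ^ k) ∧
    (⨆ k : ℕ, ((indepNum (tensorPow S (k + 1)) : ℝ) ^ ((1 : ℝ) / (k + 1)))) ≤
      (Haemers S : ℝ) := by
  refine ⟨fun k _ => indepNum_tensorPow_le hone k, ciSup_le fun k => ?_⟩
  have h : (indepNum (tensorPow S (k + 1)) : ℝ) ≤ (Haemers S : ℝ) ^ (k + 1) := by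
    exact_mod_cast indepNum_tensorPow_le hone (k + 1)
  calc (indepNum (tensorPow S (k + 1)) : ℝ) ^ ((1 : ℝ) / (k + 1))
      ≤ ((Haemers S : ℝ) ^ (k + 1)) ^ ((1 : ℝ) / (k + 1)) :=
        Real.rpow_le_rpow (Nat.cast_nonneg _) h (by positivity)
    _ = Haemers S := by
        have := Real.pow_rpow_inv_natCast (Nat.cast_nonneg (α := ℝ) (Haemers S)) k.succ_ne_zero
        simpa [one_div] using this
end
end

section
/- Let S ⊆ M_n(ℂ) and T ⊆ M_{n'}(ℂ) be noncommutative graphs. Then H(S ⊕ T) = H(S) + H(T), where S ⊕ T = {A ⊕ B : A ∈ S, B ∈ T} ⊆ M_{n+n'}(ℂ) is the direct sum consisting of all block-diagonal matrices diag(A,B) with A ∈ S and B ∈ T. -/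
/-!
A block matrix `B` with blocks in `S ⊕ T` is, after reordering its indices, the block-diagonal
matrix `diag(A, C)`, where `A` collects the `S`-parts and `C` the `T`-parts of the blocks
(`eq_joinBlocks`). The condition on the diagonal blocks splits accordingly, and
`rank B = rank A + rank C` (`rank_diag`). This gives `H(S) + H(T) ≤ H(S ⊕ T)`.

Conversely, optimal `A` and `C` for `S` and `T` combine to such a `B`, once they have the same
number of blocks. This is arranged by padding with zero blocks: `exists_pad` replaces `A` by
`(W ⊗ 1) A (W ⊗ 1)ᵀ` with `W` an isometry, which preserves membership of the blocks in `S` and the sum of the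
diagonal blocks, and does not raise the rank.
-/


open Matrix

noncomputable section

/-- `(A, B) ↦ diag(A, B)` as a linear map into block-diagonal matrices. -/
def fromBlocksLin (n n' : ℕ) :
    (Matrix (Fin n) (Fin n) ℂ × Matrix (Fin n') (Fin n') ℂ) →ₗ[ℂ]
      Matrix (Fin n ⊕ Fin n') (Fin n ⊕ Fin n') ℂ where
  toFun p := Matrix.fromBlocks p.1 0 0 p.2
  map_add' p q := by
    simp [Matrix.fromBlocks_add]
  map_smul' c p := by
    simp [Matrix.fromBlocks_smul]

/-- The direct sum of matrix subspaces: `S ⊕ T = {diag(A, B) : A ∈ S, B ∈ T}`. -/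
def dirSum {n n' : ℕ} (S : Submodule ℂ (Matrix (Fin n) (Fin n) ℂ))
    (T : Submodule ℂ (Matrix (Fin n') (Fin n') ℂ)) :
    Submodule ℂ (Matrix (Fin n ⊕ Fin n') (Fin n ⊕ Fin n') ℂ) :=
  (S.prod T).map (fromBlocksLin n n')

lemma haemers_le {ι : Type} [Fintype ι] [DecidableEq ι] {S : Submodule ℂ (Matrix ι ι ℂ)}
    {m : ℕ} (B : Matrix (Fin m × ι) (Fin m × ι) ℂ) (hB : ∀ i j, blockOf B i j ∈ S)
    (h1 : ∑ i, blockOf B i i = 1) : Haemers S ≤ B.rank :=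
  Nat.sInf_le ⟨m, B, hB, h1, rfl⟩

/-- The minimum defining the Haemers bound is attained: since `1 ∈ S`, the single block `B = 1`
is feasible. -/
lemma haemers_spec {ι : Type} [Fintype ι] [DecidableEq ι] {S : Submodule ℂ (Matrix ι ι ℂ)}
    (hS : (1 : Matrix ι ι ℂ) ∈ S) :
    ∃ m : ℕ, ∃ B : Matrix (Fin m × ι) (Fin m × ι) ℂ,
      (∀ i j, blockOf B i j ∈ S) ∧ (∑ i, blockOf B i i) = 1 ∧ B.rank = Haemers S := by
  have hone : ∀ i j : Fin 1, blockOf (1 : Matrix (Fin 1 × ι) (Fin 1 × ι) ℂ) i j = 1 := by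
    intro i j
    ext a b
    simp [blockOf, Matrix.one_apply, Subsingleton.elim i j]
  refine Nat.sInf_mem (s := { k : ℕ | ∃ m : ℕ, ∃ B : Matrix (Fin m × ι) (Fin m × ι) ℂ,
    (∀ i j : Fin m, blockOf B i j ∈ S) ∧
    (∑ i : Fin m, blockOf B i i) = 1 ∧ B.rank = k }) ⟨_, 1, 1, fun i j => ?_, ?_, rfl⟩
  · rw [hone]; exact hS
  · simp [hone]

lemma rank_diag {p q : Type*} [Fintype p] [Fintype q]
    (A : Matrix p p ℂ) (C : Matrix q q ℂ) :
    (Matrix.fromBlocks A 0 0 C).rank = A.rank + C.rank := by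
  set e := LinearEquiv.sumArrowLequivProdArrow p q ℂ ℂ
  have hcomp : e.toLinearMap ∘ₗ (Matrix.fromBlocks A 0 0 C).mulVecLin =
      (A.mulVecLin.prodMap C.mulVecLin) ∘ₗ e.toLinearMap := by
    refine LinearMap.ext fun v => ?_
    refine Prod.ext (funext fun i => ?_) (funext fun i => ?_) <;>
      simp [e, Matrix.fromBlocks_mulVec, Equiv.sumArrowEquivProdArrow,
        LinearEquiv.sumArrowLequivProdArrow]
  have hrange : (LinearMap.range (Matrix.fromBlocks A 0 0 C).mulVecLin).map e.toLinearMap =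
      (LinearMap.range A.mulVecLin).prod (LinearMap.range C.mulVecLin) := by
    rw [← LinearMap.range_comp, hcomp, LinearMap.range_comp, LinearEquiv.range, Submodule.map_top,
      LinearMap.range_prodMap]
  have hprod : ∀ (P : Submodule ℂ (p → ℂ)) (Q : Submodule ℂ (q → ℂ)),
      Module.finrank ℂ (P.prod Q) = Module.finrank ℂ P + Module.finrank ℂ Q := by
    intro P Q
    rw [← Module.finrank_prod, ← LinearMap.finrank_range_of_inj
      (f := P.subtype.prodMap Q.subtype) (Function.Injective.prodMap P.injective_subtype Q.injective_subtype),
      LinearMap.range_prodMap, Submodule.range_subtype, Submodule.range_subtype]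
  unfold Matrix.rank
  rw [← hprod, ← hrange]
  exact (LinearEquiv.finrank_map_eq e _).symm

lemma mem_dirSum_fromBlocks {n n' : ℕ} {S : Submodule ℂ (Matrix (Fin n) (Fin n) ℂ)}
    {T : Submodule ℂ (Matrix (Fin n') (Fin n') ℂ)} {A : Matrix (Fin n) (Fin n) ℂ}
    {C : Matrix (Fin n') (Fin n') ℂ} (hA : A ∈ S) (hC : C ∈ T) :
    Matrix.fromBlocks A 0 0 C ∈ dirSum S T :=
  ⟨(A, C), ⟨hA, hC⟩, rfl⟩

lemma mem_dirSum {n n' : ℕ} {S : Submodule ℂ (Matrix (Fin n) (Fin n) ℂ)}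
    {T : Submodule ℂ (Matrix (Fin n') (Fin n') ℂ)}
    {X : Matrix (Fin n ⊕ Fin n') (Fin n ⊕ Fin n') ℂ} (hX : X ∈ dirSum S T) :
    X.toBlocks₁₁ ∈ S ∧ X.toBlocks₂₂ ∈ T ∧ X.toBlocks₁₂ = 0 ∧ X.toBlocks₂₁ = 0 := by
  obtain ⟨⟨A, C⟩, ⟨hA, hC⟩, rfl⟩ := hX
  refine ⟨?_, ?_, ?_, ?_⟩
  · simpa [fromBlocksLin] using hA
  · simpa [fromBlocksLin] using hC
  · simp [fromBlocksLin]
  · simp [fromBlocksLin]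

/-- The block matrix whose `(i, j)` block is `diag(A i j, C i j)`. -/
def joinBlocks {m n n' : ℕ} (A : Matrix (Fin m × Fin n) (Fin m × Fin n) ℂ)
    (C : Matrix (Fin m × Fin n') (Fin m × Fin n') ℂ) :
    Matrix (Fin m × (Fin n ⊕ Fin n')) (Fin m × (Fin n ⊕ Fin n')) ℂ :=
  (Matrix.fromBlocks A 0 0 C).submatrix
    (Equiv.prodSumDistrib (Fin m) (Fin n) (Fin n')) (Equiv.prodSumDistrib (Fin m) (Fin n) (Fin n'))

lemma rank_joinBlocks {m n n' : ℕ} (A : Matrix (Fin m × Fin n) (Fin m × Fin n) ℂ)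
    (C : Matrix (Fin m × Fin n') (Fin m × Fin n') ℂ) :
    (joinBlocks A C).rank = A.rank + C.rank := by
  rw [joinBlocks, Matrix.rank_submatrix, rank_diag]

lemma blockOf_joinBlocks {m n n' : ℕ} (A : Matrix (Fin m × Fin n) (Fin m × Fin n) ℂ)
    (C : Matrix (Fin m × Fin n') (Fin m × Fin n') ℂ) (i j : Fin m) :
    blockOf (joinBlocks A C) i j = Matrix.fromBlocks (blockOf A i j) 0 0 (blockOf C i j) := by
  ext (a | a) (b | b) <;> simp [blockOf, joinBlocks]

/-- A block matrix with blocks in `S ⊕ T` is the join of its `S`-part and its `T`-part. -/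
lemma eq_joinBlocks {m n n' : ℕ} {S : Submodule ℂ (Matrix (Fin n) (Fin n) ℂ)}
    {T : Submodule ℂ (Matrix (Fin n') (Fin n') ℂ)}
    {B : Matrix (Fin m × (Fin n ⊕ Fin n')) (Fin m × (Fin n ⊕ Fin n')) ℂ}
    (hB : ∀ i j, blockOf B i j ∈ dirSum S T) :
    B = joinBlocks (B.submatrix (Prod.map id Sum.inl) (Prod.map id Sum.inl))
      (B.submatrix (Prod.map id Sum.inr) (Prod.map id Sum.inr)) := by
  ext ⟨i, a | a⟩ ⟨j, b | b⟩
  · simp [joinBlocks]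
  · simpa [joinBlocks, blockOf, Matrix.toBlocks₁₂, Matrix.toBlocks₂₁] using
      congrFun₂ (mem_dirSum (hB i j)).2.2.1 a b
  · simpa [joinBlocks, blockOf, Matrix.toBlocks₁₂, Matrix.toBlocks₂₁] using
      congrFun₂ (mem_dirSum (hB i j)).2.2.2 a b
  · simp [joinBlocks]

/-- The blocks of `(W ⊗ 1) A (W ⊗ 1)ᵀ` are linear combinations of the blocks of `A`. -/
lemma blockOf_conj {ι : Type} [Fintype ι] [DecidableEq ι] {m M : ℕ}
    (W : Matrix (Fin M) (Fin m) ℂ) (A : Matrix (Fin m × ι) (Fin m × ι) ℂ) (i j : Fin M) :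
    blockOf (Matrix.kroneckerMap (· * ·) W (1 : Matrix ι ι ℂ) * A *
      (Matrix.kroneckerMap (· * ·) W (1 : Matrix ι ι ℂ))ᵀ) i j =
      ∑ l, ∑ k, (W i k * W j l) • blockOf A k l := by
  ext a b
  simp [blockOf, Matrix.mul_apply, Fintype.sum_prod_type, Matrix.one_apply, Matrix.sum_apply,
    Finset.sum_mul]
  refine Finset.sum_congr rfl fun l _ => Finset.sum_congr rfl fun k _ => ?_
  ring

/-- A feasible block matrix can be padded by zero blocks without raising its rank. -/
lemma exists_pad {ι : Type} [Fintype ι] [DecidableEq ι] {S : Submodule ℂ (Matrix ι ι ℂ)}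
    {m M : ℕ} (hmM : m ≤ M) (A : Matrix (Fin m × ι) (Fin m × ι) ℂ)
    (hA : ∀ i j, blockOf A i j ∈ S) (h1 : ∑ i, blockOf A i i = 1) :
    ∃ A' : Matrix (Fin M × ι) (Fin M × ι) ℂ, (∀ i j, blockOf A' i j ∈ S) ∧
      ∑ i, blockOf A' i i = 1 ∧ A'.rank ≤ A.rank := by
  -- `W` is the isometry embedding `ℂ^m` as the first `m` coordinates of `ℂ^M`.
  let W : Matrix (Fin M) (Fin m) ℂ := fun i k => if i = Fin.castLE hmM k then 1 else 0
  have hW : ∀ k l, ∑ i, W i k * W i l = if k = l then 1 else 0 := by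
    intro k l
    simp [W, eq_comm]
  refine ⟨Matrix.kroneckerMap (· * ·) W (1 : Matrix ι ι ℂ) * A *
      (Matrix.kroneckerMap (· * ·) W (1 : Matrix ι ι ℂ))ᵀ, fun i j => ?_, ?_, ?_⟩
  · rw [blockOf_conj]
    exact Submodule.sum_mem _ fun l _ => Submodule.sum_mem _ fun k _ =>
      Submodule.smul_mem _ _ (hA k l)
  · simp_rw [blockOf_conj]
    rw [Finset.sum_comm, ← h1]
    refine Finset.sum_congr rfl fun l _ => ?_
    rw [Finset.sum_comm]
    simp_rw [← Finset.sum_smul, hW]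
    simp
  · exact (Matrix.rank_mul_le_left _ _).trans (Matrix.rank_mul_le_right _ _)

/-- The Haemers bound is additive under direct sums of noncommutative graphs. -/
theorem haemers_dirSum (n n' : ℕ)
    (S : Submodule ℂ (Matrix (Fin n) (Fin n) ℂ))
    (T : Submodule ℂ (Matrix (Fin n') (Fin n') ℂ))
    (hSstar : ∀ A ∈ S, Aᴴ ∈ S) (hSone : (1 : Matrix (Fin n) (Fin n) ℂ) ∈ S)
    (hTstar : ∀ A ∈ T, Aᴴ ∈ T) (hTone : (1 : Matrix (Fin n') (Fin n') ℂ) ∈ T) :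
    Haemers (dirSum S T) = Haemers S + Haemers T := by
  apply le_antisymm
  · obtain ⟨m, A, hA, hA1, hAr⟩ := haemers_spec hSone
    obtain ⟨m', C, hC, hC1, hCr⟩ := haemers_spec hTone
    obtain ⟨A', hA', hA1', hAr'⟩ := exists_pad (le_max_left m m') A hA hA1
    obtain ⟨C', hC', hC1', hCr'⟩ := exists_pad (le_max_right m m') C hC hC1
    have h := haemers_le (S := dirSum S T) (joinBlocks A' C')
      (fun i j => by
        rw [blockOf_joinBlocks]
        exact mem_dirSum_fromBlocks (hA' i j) (hC' i j))
      (by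
        simp_rw [blockOf_joinBlocks]
        rw [← Matrix.fromBlocks_one, ← hA1', ← hC1']
        ext (a | a) (b | b) <;> simp [Matrix.sum_apply])
    rw [rank_joinBlocks] at h
    omega
  · have hone : (1 : Matrix (Fin n ⊕ Fin n') (Fin n ⊕ Fin n') ℂ) ∈ dirSum S T := by
      rw [← Matrix.fromBlocks_one]
      exact mem_dirSum_fromBlocks hSone hTone
    obtain ⟨m, B, hB, hB1, hBr⟩ := haemers_spec hone
    rw [← hBr, eq_joinBlocks hB, rank_joinBlocks]
    refine add_le_add (haemers_le _ (fun i j => (mem_dirSum (hB i j)).1) ?_)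
      (haemers_le _ (fun i j => (mem_dirSum (hB i j)).2.1) ?_)
    · ext a b
      simpa [Matrix.sum_apply, blockOf, Matrix.one_apply] using
        congrFun₂ hB1 (Sum.inl a) (Sum.inl b)
    · ext a b
      simpa [Matrix.sum_apply, blockOf, Matrix.one_apply] using
        congrFun₂ hB1 (Sum.inr a) (Sum.inr b)
end
end
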